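/- Let X be a metric space with a Borel probability measure λ, let (x_j)_{j∈J} be a finite family of points of X, and let C > 0, R > 0, r > 0 and δ with 0 < δ < r/2. Write N_η(A) for the open η-neighborhood of A and N_{−η}(A) for the complement of N_η(X \ A), and for B ⊆ X put Ft(B) = #{j ∈ J : x_j ∈ B}. Assume: (i) (equidistribution) for every B ⊆ X, (1−δ)·λ(N_{−δ}(B)) ≤ Ft(B)/C ≤ (1+δ)·λ(N_δ(B)); (ii) (expansion) for every A ⊆ X and every η > 0, if λ(N_η(A)) ≤ 1/2 then λ(N_η(A)) ≥ (1 + η/R)·λ(A); (iii) (arithmetic) 1/(1 + (r/2 − δ)·(1/R)) ≤ (1 − δ)/(1 + δ). Let ρ : X → X be a bijective isometry with ρ_*λ = λ. Then for every B ⊆ X, Ft(B) ≤ Ft(ρ(N_r(B))). -/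

import Mathlib

open MeasureTheory

/-- The open `η`-neighborhood of a set `A` in a metric space:
the union of the open balls of radius `η` centered at points of `A`. -/
def nbhd {X : Type*} [MetricSpace X] (η : ℝ) (A : Set X) : Set X :=
  ⋃ a ∈ A, Metric.ball a η

/-!
Expansion applied to `N_δ(S)` beats the equidistribution error, so `Ft(S) ≤ Ft(T)` as soon as
`λ(N_{r/2}(S)) ≤ 1/2` and `λ(N_{r/2}(S)) ≤ λ(N_{-δ}(T))`. Let `f = ρ⁻¹` and let `D` be the
complement of `f⁻¹(N_r(B))`. Since `f` is 1-Lipschitz, `N_{r/2}(D)` is disjoint from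
`f⁻¹(N_{r/2}(B))`, a set of the same measure as `N_{r/2}(B)`. If `λ(N_{r/2}(B)) ≤ 1/2`, compare `B`
with `f⁻¹(N_r(B))`; otherwise `λ(N_{r/2}(D)) ≤ 1/2`, and comparing `D` with `Bᶜ` gives the claim by
passing to complements.
-/

open Metric

section Thickening

variable {X Y : Type*} [PseudoEMetricSpace X] [PseudoEMetricSpace Y]

theorem thickening_compl_thickening_add_subset (η ζ : ℝ) (S : Set X) :
    thickening η (thickening (η + ζ) S)ᶜ ⊆ (thickening ζ S)ᶜ :=
  (thickening_subset_of_subset η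
    (Set.compl_subset_compl.2 (thickening_thickening_subset η ζ S))).trans
      (thickening_compl_thickening_self_subset_compl η (thickening ζ S))

theorem thickening_preimage_subset_of_lipschitzWith_one {f : X → Y} (hf : LipschitzWith 1 f)
    (η : ℝ) (S : Set Y) : thickening η (f ⁻¹' S) ⊆ f ⁻¹' thickening η S := by
  intro y hy
  obtain ⟨z, hz, hyz⟩ := (mem_thickening_iff_exists_edist_lt _ _).1 hy
  refine (mem_thickening_iff_exists_edist_lt _ _).2 ⟨f z, hz, ?_⟩
  exact (by simpa using hf y z : edist (f y) (f z) ≤ edist y z).trans_lt hyz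

theorem thickening_compl_preimage_thickening_add_subset {f : X → Y} (hf : LipschitzWith 1 f)
    (η ζ : ℝ) (S : Set Y) :
    thickening η (f ⁻¹' thickening (η + ζ) S)ᶜ ⊆ (f ⁻¹' thickening ζ S)ᶜ := by
  rw [← Set.preimage_compl, ← Set.preimage_compl]
  exact (thickening_preimage_subset_of_lipschitzWith_one hf η _).trans
    (Set.preimage_mono (thickening_compl_thickening_add_subset η ζ S))

end Thickening

theorem nbhd_eq_thickening {X : Type*} [MetricSpace X] (η : ℝ) (A : Set X) :
    nbhd η A = thickening η A :=
  thickening_eq_biUnion_ball.symm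

section Counting

variable {J X : Type*} [Finite J] (x : J → X)

theorem card_mem_add_card_mem_compl (S : Set X) :
    Nat.card {j // x j ∈ S} + Nat.card {j // x j ∈ Sᶜ} = Nat.card J :=
  Set.ncard_add_ncard_compl (x ⁻¹' S)

theorem card_mem_le_card_mem_of_compl {S T : Set X}
    (h : Nat.card {j // x j ∈ Tᶜ} ≤ Nat.card {j // x j ∈ Sᶜ}) :
    Nat.card {j // x j ∈ S} ≤ Nat.card {j // x j ∈ T} := by
  have hS := card_mem_add_card_mem_compl x S
  have hT := card_mem_add_card_mem_compl x T
  lia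

end Counting

section Matching

variable {J X : Type*} [PseudoEMetricSpace X] [MeasurableSpace X] {μ : Measure X} {x : J → X}
  {C R r δ : ℝ}

/-- The points `x j` are equidistributed with density `C` at scale `δ`: the normalized number of
points in a set agrees with its measure, up to a factor `1 ± δ` and a displacement by `δ`. The set
`(thickening δ Bᶜ)ᶜ` is the inner neighborhood `N_{-δ}(B)`. -/
def IsEquidistributedAt (μ : Measure X) (x : J → X) (C δ : ℝ) : Prop :=
  ∀ B : Set X,
    (1 - δ) * μ.real (thickening δ Bᶜ)ᶜ ≤ Nat.card {j // x j ∈ B} / C ∧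
      Nat.card {j // x j ∈ B} / C ≤ (1 + δ) * μ.real (thickening δ B)

/-- Cheeger-type expansion at rate `1 / R`: as long as a neighborhood has measure at most `1 / 2`,
that measure is at least `1 + η / R` times the measure of the original set. -/
def HasExpansion (μ : Measure X) (R : ℝ) : Prop :=
  ∀ (A : Set X) (η : ℝ), 0 < η → μ.real (thickening η A) ≤ 1 / 2 →
    (1 + η / R) * μ.real A ≤ μ.real (thickening η A)

theorem HasExpansion.mul_measureReal_thickening_le [IsFiniteMeasure μ] (hexp : HasExpansion μ R)
    {ζ : ℝ} (hδζ : δ < ζ) {S : Set X} (hS : μ.real (thickening ζ S) ≤ 1 / 2) :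
    (1 + (ζ - δ) / R) * μ.real (thickening δ S) ≤ μ.real (thickening ζ S) := by
  have hmono : μ.real (thickening (ζ - δ) (thickening δ S)) ≤ μ.real (thickening ζ S) :=
    measureReal_mono (by simpa using thickening_thickening_subset (ζ - δ) δ S)
  exact (hexp _ _ (sub_pos.2 hδζ) (hmono.trans hS)).trans hmono

theorem IsEquidistributedAt.card_mem_le_of_measureReal_thickening_le [IsFiniteMeasure μ]
    (hequi : IsEquidistributedAt μ x C δ) (hexp : HasExpansion μ R) (hC : 0 < C) {ζ : ℝ}
    (hδζ : δ < ζ) (hδ1 : δ ≤ 1) (hgain : 1 + δ ≤ (1 - δ) * (1 + (ζ - δ) / R)) {S T : Set X}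
    (hS : μ.real (thickening ζ S) ≤ 1 / 2)
    (hST : μ.real (thickening ζ S) ≤ μ.real (thickening δ Tᶜ)ᶜ) :
    Nat.card {j // x j ∈ S} ≤ Nat.card {j // x j ∈ T} := by
  have h : (Nat.card {j // x j ∈ S} : ℝ) / C ≤ Nat.card {j // x j ∈ T} / C :=
    calc
      _ ≤ (1 + δ) * μ.real (thickening δ S) := (hequi S).2
      _ ≤ (1 - δ) * (1 + (ζ - δ) / R) * μ.real (thickening δ S) := by gcongr
      _ = (1 - δ) * ((1 + (ζ - δ) / R) * μ.real (thickening δ S)) := mul_assoc _ _ _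
      _ ≤ (1 - δ) * μ.real (thickening δ Tᶜ)ᶜ :=
        mul_le_mul_of_nonneg_left ((hexp.mul_measureReal_thickening_le hδζ hS).trans hST)
          (sub_nonneg.2 hδ1)
      _ ≤ _ := (hequi T).1
  exact_mod_cast (div_le_div_iff_of_pos_right hC).1 h

theorem stmt7_general [OpensMeasurableSpace X] [IsProbabilityMeasure μ] [Finite J]
    (hC : 0 < C) (hR : 0 < R) (hδ0 : 0 < δ) (hδ : δ < r / 2)
    (hequi : IsEquidistributedAt μ x C δ) (hexp : HasExpansion μ R)
    (harith : 1 / (1 + (r / 2 - δ) * (1 / R)) ≤ (1 - δ) / (1 + δ))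
    {f : X → X} (hf : LipschitzWith 1 f) (hfμ : MeasurePreserving f μ μ) (B : Set X) :
    Nat.card {j // x j ∈ B} ≤ Nat.card {j // x j ∈ f ⁻¹' thickening r B} := by
  have hgain : 0 < 1 + (r / 2 - δ) / R := by
    have : 0 < r / 2 - δ := sub_pos.2 hδ
    positivity
  have herror : 1 + δ ≤ (1 - δ) * (1 + (r / 2 - δ) / R) := by
    rwa [mul_one_div, div_le_div_iff₀ hgain (by positivity), one_mul] at harith
  have hδ1 : δ ≤ 1 := by
    by_contra! h
    linarith [mul_neg_of_neg_of_pos (sub_neg.2 h) hgain]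
  have hN : NullMeasurableSet (thickening (r / 2) B) μ :=
    isOpen_thickening.measurableSet.nullMeasurableSet
  have hD : thickening (r / 2) (f ⁻¹' thickening r B)ᶜ ⊆ (f ⁻¹' thickening (r / 2) B)ᶜ := by
    simpa only [add_halves] using
      thickening_compl_preimage_thickening_add_subset hf (r / 2) (r / 2) B
  rcases le_or_gt (μ.real (thickening (r / 2) B)) (1 / 2) with hB | hB
  · refine hequi.card_mem_le_of_measureReal_thickening_le hexp hC hδ hδ1 herror hB ?_
    rw [← hfμ.measureReal_preimage hN]
    have hDδ : thickening δ (f ⁻¹' thickening r B)ᶜ ⊆ (f ⁻¹' thickening (r / 2) B)ᶜ :=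
      (thickening_mono hδ.le _).trans hD
    exact measureReal_mono (Set.subset_compl_comm.1 hDδ)
  · have hDle : μ.real (thickening (r / 2) (f ⁻¹' thickening r B)ᶜ) ≤
        μ.real (thickening (r / 2) B)ᶜ :=
      calc
        _ ≤ μ.real (f ⁻¹' thickening (r / 2) B)ᶜ := measureReal_mono hD
        _ = μ.real (thickening (r / 2) B)ᶜ := by
          rw [← Set.preimage_compl, hfμ.measureReal_preimage hN.compl]
    apply card_mem_le_card_mem_of_compl x
    refine hequi.card_mem_le_of_measureReal_thickening_le hexp hC hδ hδ1 herror ?_ ?_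
    · linarith [probReal_compl_eq_one_sub₀ hN]
    · rw [compl_compl]
      exact hDle.trans (measureReal_mono (Set.compl_subset_compl.2 (thickening_mono hδ.le B)))

end Matching

theorem measurePreserving_isometryEquiv_symm {X Y : Type*} [PseudoEMetricSpace X]
    [PseudoEMetricSpace Y] [MeasurableSpace X] [MeasurableSpace Y] [BorelSpace X] [BorelSpace Y]
    {μ : Measure X} {ν : Measure Y} (e : X ≃ᵢ Y) (he : MeasurePreserving e μ ν) :
    MeasurePreserving e.symm ν μ :=
  MeasurePreserving.symm e.toHomeomorph.toMeasurableEquiv he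

/-- Abstract matching lemma: given the equidistribution of the points `x j` at scale `δ`,
the Cheeger-type expansion property, and the arithmetic inequality, for any
measure-preserving bijective isometry `ρ` and any `B ⊆ X`, the number of points in `B`
is at most the number of points in `ρ(N_r(B))`. -/
theorem stmt7 {X : Type*} [MetricSpace X] [MeasurableSpace X] [BorelSpace X]
    (lam : Measure X) [IsProbabilityMeasure lam]
    {J : Type*} [Fintype J] (x : J → X)
    (C R r δ : ℝ) (hC : 0 < C) (hR : 0 < R) (hr : 0 < r)
    (hδ0 : 0 < δ) (hδ : δ < r / 2)
    (hequi : ∀ B : Set X,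
      (1 - δ) * (lam ((nbhd δ Bᶜ)ᶜ)).toReal ≤ (Nat.card {j : J // x j ∈ B} : ℝ) / C ∧
      (Nat.card {j : J // x j ∈ B} : ℝ) / C ≤ (1 + δ) * (lam (nbhd δ B)).toReal)
    (hexp : ∀ (A : Set X) (η : ℝ), 0 < η → (lam (nbhd η A)).toReal ≤ 1 / 2 →
      (1 + η / R) * (lam A).toReal ≤ (lam (nbhd η A)).toReal)
    (harith : 1 / (1 + (r / 2 - δ) * (1 / R)) ≤ (1 - δ) / (1 + δ))
    (ρ : X → X) (hρ : Isometry ρ) (hρbij : Function.Bijective ρ)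
    (hρmp : Measure.map ρ lam = lam) :
    ∀ B : Set X,
      (Nat.card {j : J // x j ∈ B} : ℝ) ≤ (Nat.card {j : J // x j ∈ ρ '' nbhd r B} : ℝ) := by
  let e : X ≃ᵢ X := ⟨Equiv.ofBijective ρ hρbij, hρ⟩
  have he : MeasurePreserving e lam lam := ⟨hρ.continuous.measurable, hρmp⟩
  intro B
  simp only [nbhd_eq_thickening] at hequi hexp ⊢
  exact_mod_cast e.preimage_symm ▸ stmt7_general hC hR hδ0 hδ hequi hexp harith
    e.symm.isometry.lipschitz (measurePreserving_isometryEquiv_symm e he) B
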